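/- arXiv:2205.03723 — 2 statements merged into one kernel-verified Lean document; each statement's English description precedes it below -/
import Mathlib

section
/- If (s, l, r, β, V) is a bimodule of a Hom-Novikov-Poisson color Hom-algebra (A, ·, ⋄, ε, α), then A ⊕ V with products (x₁+v₁)·'(x₂+v₂) = x₁·x₂ + s(x₁)v₂ + ε(v₁,x₂)s(x₂)v₁ and (x₁+v₁)⋄'(x₂+v₂) = x₁⋄x₂ + l(x₁)v₂ + r(x₂)v₁, and twisting α⊕β, is a Hom-Novikov-Poisson color Hom-algebra. -/
open scoped TensorProduct

section ColorHomDefs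

variable {K Γ A V : Type*} [Field K] [AddCommGroup Γ]
variable [AddCommGroup A] [Module K A] [AddCommGroup V] [Module K V]

/-- A commutation factor (skew-symmetric bicharacter) on `Γ` with values in `K`. -/
def IsCommFactor (ε : Γ → Γ → K) : Prop :=
  (∀ a b, ε a b ≠ 0) ∧ (∀ a b, ε a b * ε b a = 1) ∧
    (∀ a b c, ε a (b + c) = ε a b * ε a c) ∧
    (∀ a b c, ε (a + b) c = ε a c * ε b c)

/-- The (even bilinear) product respects the grading. -/
def GradedMul (𝒜 : Γ → Submodule K A) (μ : A →ₗ[K] A →ₗ[K] A) : Prop :=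
  ∀ ⦃γ₁ γ₂ : Γ⦄ ⦃x y : A⦄, x ∈ 𝒜 γ₁ → y ∈ 𝒜 γ₂ → μ x y ∈ 𝒜 (γ₁ + γ₂)

/-- An even linear map. -/
def GradedEnd (𝒜 : Γ → Submodule K A) (f : A →ₗ[K] A) : Prop :=
  ∀ ⦃γ : Γ⦄ ⦃x : A⦄, x ∈ 𝒜 γ → f x ∈ 𝒜 γ

/-- ε-commutativity on homogeneous elements. -/
def IsEpsComm (𝒜 : Γ → Submodule K A) (ε : Γ → Γ → K) (μ : A →ₗ[K] A →ₗ[K] A) : Prop :=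
  ∀ ⦃γ₁ γ₂ : Γ⦄ ⦃x y : A⦄, x ∈ 𝒜 γ₁ → y ∈ 𝒜 γ₂ → μ x y = ε γ₁ γ₂ • μ y x

/-- Hom-associativity on homogeneous elements. -/
def IsHomAssoc (𝒜 : Γ → Submodule K A) (μ : A →ₗ[K] A →ₗ[K] A) (α : A →ₗ[K] A) : Prop :=
  ∀ ⦃γ₁ γ₂ γ₃ : Γ⦄ ⦃x y z : A⦄, x ∈ 𝒜 γ₁ → y ∈ 𝒜 γ₂ → z ∈ 𝒜 γ₃ →
    μ (μ x y) (α z) = μ (α x) (μ y z)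

/-- The two defining identities of a Hom-Novikov color Hom-algebra. -/
def IsHomNovikov (𝒜 : Γ → Submodule K A) (ε : Γ → Γ → K) (μ : A →ₗ[K] A →ₗ[K] A)
    (α : A →ₗ[K] A) : Prop :=
  (∀ ⦃γ₁ γ₂ γ₃ : Γ⦄ ⦃x y z : A⦄, x ∈ 𝒜 γ₁ → y ∈ 𝒜 γ₂ → z ∈ 𝒜 γ₃ →
      μ (μ x y) (α z) - μ (α x) (μ y z)
        = ε γ₁ γ₂ • (μ (μ y x) (α z) - μ (α y) (μ x z))) ∧
  (∀ ⦃γ₁ γ₂ γ₃ : Γ⦄ ⦃x y z : A⦄, x ∈ 𝒜 γ₁ → y ∈ 𝒜 γ₂ → z ∈ 𝒜 γ₃ →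
      μ (μ x y) (α z) = ε γ₂ γ₃ • μ (μ x z) (α y))

/-- ε-skew-symmetry and the ε-Hom-Jacobi identity for a bilinear bracket. -/
def IsHomLie (𝒜 : Γ → Submodule K A) (ε : Γ → Γ → K) (br : A →ₗ[K] A →ₗ[K] A)
    (α : A →ₗ[K] A) : Prop :=
  (∀ ⦃γ₁ γ₂ : Γ⦄ ⦃x y : A⦄, x ∈ 𝒜 γ₁ → y ∈ 𝒜 γ₂ → br x y = -(ε γ₁ γ₂ • br y x)) ∧
  (∀ ⦃γ₁ γ₂ γ₃ : Γ⦄ ⦃x y z : A⦄, x ∈ 𝒜 γ₁ → y ∈ 𝒜 γ₂ → z ∈ 𝒜 γ₃ →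
      ε γ₃ γ₁ • br (α x) (br y z) + ε γ₁ γ₂ • br (α y) (br z x)
        + ε γ₂ γ₃ • br (α z) (br x y) = 0)

/-- Compatibility conditions of a Hom-Novikov-Poisson color Hom-algebra. -/
def HNPCompat (𝒜 : Γ → Submodule K A) (ε : Γ → Γ → K) (μ d : A →ₗ[K] A →ₗ[K] A)
    (α : A →ₗ[K] A) : Prop :=
  (∀ ⦃γ₁ γ₂ γ₃ : Γ⦄ ⦃x y z : A⦄, x ∈ 𝒜 γ₁ → y ∈ 𝒜 γ₂ → z ∈ 𝒜 γ₃ →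
      d (μ x y) (α z) = ε γ₂ γ₃ • μ (d x z) (α y)) ∧
  (∀ ⦃γ₁ γ₂ γ₃ : Γ⦄ ⦃x y z : A⦄, x ∈ 𝒜 γ₁ → y ∈ 𝒜 γ₂ → z ∈ 𝒜 γ₃ →
      μ (d x y) (α z) - d (α x) (μ y z)
        = ε γ₁ γ₂ • (μ (d y x) (α z) - d (α y) (μ x z)))

/-- Hom-Novikov-Poisson color Hom-algebra: `μ` is the ε-commutative Hom-associative
product, `d` the Hom-Novikov product. -/
def IsHNP (𝒜 : Γ → Submodule K A) (ε : Γ → Γ → K) (μ d : A →ₗ[K] A →ₗ[K] A)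
    (α : A →ₗ[K] A) : Prop :=
  GradedMul 𝒜 μ ∧ GradedMul 𝒜 d ∧ GradedEnd 𝒜 α ∧
    IsEpsComm 𝒜 ε μ ∧ IsHomAssoc 𝒜 μ α ∧ IsHomNovikov 𝒜 ε d α ∧ HNPCompat 𝒜 ε μ d α

/-- Admissibility: the left Hom-associator mixing the two products vanishes. -/
def IsAdmissibleHNP (𝒜 : Γ → Submodule K A) (ε : Γ → Γ → K) (μ d : A →ₗ[K] A →ₗ[K] A)
    (α : A →ₗ[K] A) : Prop :=
  IsHNP 𝒜 ε μ d α ∧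
    ∀ ⦃γ₁ γ₂ γ₃ : Γ⦄ ⦃x y z : A⦄, x ∈ 𝒜 γ₁ → y ∈ 𝒜 γ₂ → z ∈ 𝒜 γ₃ →
      d (μ x y) (α z) = d (α x) (μ y z)

/-- Gelfand-Dorfman compatibility for a bilinear bracket. -/
def GDCompat (𝒜 : Γ → Submodule K A) (ε : Γ → Γ → K) (μ br : A →ₗ[K] A →ₗ[K] A)
    (α : A →ₗ[K] A) : Prop :=
  ∀ ⦃γ₁ γ₂ γ₃ : Γ⦄ ⦃x y z : A⦄, x ∈ 𝒜 γ₁ → y ∈ 𝒜 γ₂ → z ∈ 𝒜 γ₃ →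
    μ (α y) (br x z)
      = ε γ₂ γ₁ • br (α x) (μ y z) - ε (γ₁ + γ₂) γ₃ • br (α z) (μ y x)
        + μ (br y x) (α z) - ε γ₁ γ₃ • μ (br y z) (α x)

/-- The transposed Hom-ε-Leibniz identity. -/
def TransposedLeibniz (𝒜 : Γ → Submodule K A) (ε : Γ → Γ → K) (μ br : A →ₗ[K] A →ₗ[K] A)
    (α : A →ₗ[K] A) : Prop :=
  ∀ ⦃γ₁ γ₂ γ₃ : Γ⦄ ⦃x y z : A⦄, x ∈ 𝒜 γ₁ → y ∈ 𝒜 γ₂ → z ∈ 𝒜 γ₃ →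
    (2 : K) • μ (α z) (br x y) = br (μ z x) (α y) + ε γ₃ γ₁ • br (α x) (μ z y)

/-- The ε-commutator bracket of homogeneous elements of degrees `γ`, `δ`. -/
def brkt (ε : Γ → Γ → K) (μ : A →ₗ[K] A →ₗ[K] A) (γ δ : Γ) (x y : A) : A :=
  μ x y - ε γ δ • μ y x

/-- The Yau twist `x ∗ y = α (μ x y)` of a bilinear product. -/
def twistMul (α : A →ₗ[K] A) (μ : A →ₗ[K] A →ₗ[K] A) : A →ₗ[K] A →ₗ[K] A :=
  (LinearMap.llcomp K A A A α).comp μ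

/-- The product `x ⋄ y = μ x (D y)`. -/
def precompMul (D : A →ₗ[K] A) (μ : A →ₗ[K] A →ₗ[K] A) : A →ₗ[K] A →ₗ[K] A :=
  (LinearMap.lcomp K A D).comp μ

/-- Semidirect product of an ε-commutative Hom-associative color Hom-algebra with a
bimodule, on homogeneous elements of degrees `γ₁`, `γ₂`. -/
def sdDot (ε : Γ → Γ → K) (μ : A →ₗ[K] A →ₗ[K] A) (s : A →ₗ[K] V →ₗ[K] V)
    (γ₁ γ₂ : Γ) (X Y : A × V) : A × V :=
  (μ X.1 Y.1, s X.1 Y.2 + ε γ₁ γ₂ • s Y.1 X.2)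

/-- Semidirect product of a Hom-Novikov color Hom-algebra with a bimodule. -/
def sdDiam (μ : A →ₗ[K] A →ₗ[K] A) (l r : A →ₗ[K] V →ₗ[K] V) (X Y : A × V) : A × V :=
  (μ X.1 Y.1, l X.1 Y.2 + r Y.1 X.2)

/-- Semidirect product bracket of a Hom-Lie color Hom-algebra with a representation. -/
def sdBr (ε : Γ → Γ → K) (br : A →ₗ[K] A →ₗ[K] A) (ρ : A →ₗ[K] V →ₗ[K] V)
    (γ₁ γ₂ : Γ) (X Y : A × V) : A × V :=
  (br X.1 Y.1, ρ X.1 Y.2 - ε γ₁ γ₂ • ρ Y.1 X.2)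

/-- The twisting map `α ⊕ β` on `A × V`. -/
def sdEnd (α : A →ₗ[K] A) (β : V →ₗ[K] V) (X : A × V) : A × V := (α X.1, β X.2)

end ColorHomDefs

/-!
Apart from ε-commutativity, every identity to check is trilinear, and its component in `A` is an
identity of the algebra. Two elements of `V` have product zero, so the component in `V` splits
into three parts, according to which of the three factors contributes its `V`-coordinate. Each
part is a bimodule axiom, transported where necessary by the commutativity of `μ` or by
`ε a b * ε b a = 1`.
-/

section Bimodule

variable {K Γ A V : Type*} [Field K] [AddCommGroup A] [Module K A] [AddCommGroup V]
  [Module K V]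

/-- The identity making `(s, β, V)` a bimodule of an ε-commutative Hom-associative color
Hom-algebra `(A, μ, α)`; the right action is `s` up to `ε`. -/
def IsHomAssocBimodule (𝒜 : Γ → Submodule K A) (𝒱 : Γ → Submodule K V)
    (μ : A →ₗ[K] A →ₗ[K] A) (α : A →ₗ[K] A) (β : V →ₗ[K] V) (s : A →ₗ[K] V →ₗ[K] V) : Prop :=
  ∀ ⦃γ₁ γ₂ γ₃ : Γ⦄ ⦃x y : A⦄ ⦃v : V⦄, x ∈ 𝒜 γ₁ → y ∈ 𝒜 γ₂ → v ∈ 𝒱 γ₃ →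
    s (μ x y) (β v) = s (α x) (s y v)

/-- The identities making `(l, r, β, V)` a bimodule of a Hom-Novikov color Hom-algebra
`(A, d, α)`. The suffixes `xyv`, `xvy`, `vxy` give the order of the factors in the Hom-Novikov
identity from which the axiom is read off. -/
structure IsHomNovikovBimodule (𝒜 : Γ → Submodule K A) (𝒱 : Γ → Submodule K V)
    (ε : Γ → Γ → K) (d : A →ₗ[K] A →ₗ[K] A) (α : A →ₗ[K] A) (β : V →ₗ[K] V)
    (l r : A →ₗ[K] V →ₗ[K] V) : Prop where
  left_symm_xyv : ∀ ⦃γ₁ γ₂ γ₃ : Γ⦄ ⦃x y : A⦄ ⦃v : V⦄, x ∈ 𝒜 γ₁ → y ∈ 𝒜 γ₂ → v ∈ 𝒱 γ₃ →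
    l (d x y) (β v) - l (α x) (l y v) = ε γ₁ γ₂ • (l (d y x) (β v) - l (α y) (l x v))
  left_symm_xvy : ∀ ⦃γ₁ γ₂ γ₃ : Γ⦄ ⦃x y : A⦄ ⦃v : V⦄, x ∈ 𝒜 γ₁ → y ∈ 𝒜 γ₂ → v ∈ 𝒱 γ₃ →
    r (α y) (l x v) - l (α x) (r y v) = ε γ₁ γ₃ • (r (α y) (r x v) - r (d x y) (β v))
  left_symm_vxy : ∀ ⦃γ₁ γ₂ γ₃ : Γ⦄ ⦃x y : A⦄ ⦃v : V⦄, x ∈ 𝒜 γ₁ → y ∈ 𝒜 γ₂ → v ∈ 𝒱 γ₃ →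
    r (α y) (r x v) - r (d x y) (β v) = ε γ₃ γ₁ • (r (α y) (l x v) - l (α x) (r y v))
  right_comm_xyv : ∀ ⦃γ₁ γ₂ γ₃ : Γ⦄ ⦃x y : A⦄ ⦃v : V⦄, x ∈ 𝒜 γ₁ → y ∈ 𝒜 γ₂ → v ∈ 𝒱 γ₃ →
    l (d x y) (β v) = ε γ₂ γ₃ • r (α y) (l x v)
  right_comm_xvy : ∀ ⦃γ₁ γ₂ γ₃ : Γ⦄ ⦃x y : A⦄ ⦃v : V⦄, x ∈ 𝒜 γ₁ → y ∈ 𝒜 γ₂ → v ∈ 𝒱 γ₃ →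
    r (α y) (l x v) = ε γ₃ γ₂ • l (d x y) (β v)
  right_comm_vxy : ∀ ⦃γ₁ γ₂ γ₃ : Γ⦄ ⦃x y : A⦄ ⦃v : V⦄, x ∈ 𝒜 γ₁ → y ∈ 𝒜 γ₂ → v ∈ 𝒱 γ₃ →
    r (α y) (r x v) = ε γ₁ γ₂ • r (α x) (r y v)

variable {𝒜 : Γ → Submodule K A} {𝒱 : Γ → Submodule K V} {ε : Γ → Γ → K}
  {μ d : A →ₗ[K] A →ₗ[K] A} {α : A →ₗ[K] A} {β : V →ₗ[K] V} {s l r : A →ₗ[K] V →ₗ[K] V}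
  {γ₁ γ₂ γ₃ : Γ} {x y : A} {v : V} {X Y Z : A × V}

theorem IsHomAssocBimodule.action_comm (hs : IsHomAssocBimodule 𝒜 𝒱 μ α β s)
    (hcomm : IsEpsComm 𝒜 ε μ) (hx : x ∈ 𝒜 γ₁) (hy : y ∈ 𝒜 γ₂) (hv : v ∈ 𝒱 γ₃) :
    s (α x) (s y v) = ε γ₁ γ₂ • s (α y) (s x v) :=
  calc
    s (α x) (s y v) = s (μ x y) (β v) := (hs hx hy hv).symm
    _ = ε γ₁ γ₂ • s (μ y x) (β v) := by rw [hcomm hx hy, map_smul, LinearMap.smul_apply]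
    _ = ε γ₁ γ₂ • s (α y) (s x v) := by rw [hs hy hx hv]

theorem IsHomNovikovBimodule.sdDiam_left_symm (h : IsHomNovikovBimodule 𝒜 𝒱 ε d α β l r)
    (hd : IsHomNovikov 𝒜 ε d α) (hX : X ∈ (𝒜 γ₁).prod (𝒱 γ₁))
    (hY : Y ∈ (𝒜 γ₂).prod (𝒱 γ₂)) (hZ : Z ∈ (𝒜 γ₃).prod (𝒱 γ₃)) :
    sdDiam d l r (sdDiam d l r X Y) (sdEnd α β Z)
        - sdDiam d l r (sdEnd α β X) (sdDiam d l r Y Z)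
      = ε γ₁ γ₂ • (sdDiam d l r (sdDiam d l r Y X) (sdEnd α β Z)
        - sdDiam d l r (sdEnd α β Y) (sdDiam d l r X Z)) := by
  obtain ⟨hx, hu⟩ := Submodule.mem_prod.1 hX
  obtain ⟨hy, hv⟩ := Submodule.mem_prod.1 hY
  obtain ⟨hz, hw⟩ := Submodule.mem_prod.1 hZ
  refine Prod.ext (hd.1 hx hy hz) ?_
  simp only [sdDiam, sdEnd, map_add, Prod.snd_sub, Prod.smul_snd]
  linear_combination (norm := module)
    h.left_symm_xyv hx hy hw + h.left_symm_xvy hx hz hv + h.left_symm_vxy hy hz hu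

theorem IsHomNovikovBimodule.sdDiam_right_comm (h : IsHomNovikovBimodule 𝒜 𝒱 ε d α β l r)
    (hd : IsHomNovikov 𝒜 ε d α) (hX : X ∈ (𝒜 γ₁).prod (𝒱 γ₁))
    (hY : Y ∈ (𝒜 γ₂).prod (𝒱 γ₂)) (hZ : Z ∈ (𝒜 γ₃).prod (𝒱 γ₃)) :
    sdDiam d l r (sdDiam d l r X Y) (sdEnd α β Z)
      = ε γ₂ γ₃ • sdDiam d l r (sdDiam d l r X Z) (sdEnd α β Y) := by
  obtain ⟨hx, hu⟩ := Submodule.mem_prod.1 hX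
  obtain ⟨hy, hv⟩ := Submodule.mem_prod.1 hY
  obtain ⟨hz, hw⟩ := Submodule.mem_prod.1 hZ
  refine Prod.ext (hd.2 hx hy hz) ?_
  simp only [sdDiam, sdEnd, map_add, Prod.smul_snd]
  linear_combination (norm := module)
    h.right_comm_xyv hx hy hw + h.right_comm_xvy hx hz hv + h.right_comm_vxy hy hz hu

variable [AddCommGroup Γ]

/-- Evenness of a bilinear action of `A` on `V`: it adds degrees. Left and right actions are both
written with the element of `A` first. -/
def GradedAction (𝒜 : Γ → Submodule K A) (𝒱 : Γ → Submodule K V) (ρ : A →ₗ[K] V →ₗ[K] V) :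
    Prop :=
  ∀ ⦃γ₁ γ₂ : Γ⦄ ⦃x : A⦄ ⦃v : V⦄, x ∈ 𝒜 γ₁ → v ∈ 𝒱 γ₂ → ρ x v ∈ 𝒱 (γ₁ + γ₂)

/-- The compatibility of `s` with `l` and `r` in a bimodule of a Hom-Novikov-Poisson color
Hom-algebra. The fields `dot_diam` come from the first identity of `HNPCompat`, the fields
`diam_dot` from the second one; suffixes are as in `IsHomNovikovBimodule`. -/
structure HNPBimoduleCompat (𝒜 : Γ → Submodule K A) (𝒱 : Γ → Submodule K V)
    (ε : Γ → Γ → K) (μ d : A →ₗ[K] A →ₗ[K] A) (α : A →ₗ[K] A) (β : V →ₗ[K] V)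
    (s l r : A →ₗ[K] V →ₗ[K] V) : Prop where
  dot_diam_xyv : ∀ ⦃γ₁ γ₂ γ₃ : Γ⦄ ⦃x y : A⦄ ⦃v : V⦄, x ∈ 𝒜 γ₁ → y ∈ 𝒜 γ₂ → v ∈ 𝒱 γ₃ →
    l (μ x y) (β v) = ε γ₁ γ₂ • s (α y) (l x v)
  dot_diam_xvy : ∀ ⦃γ₁ γ₂ γ₃ : Γ⦄ ⦃x y : A⦄ ⦃v : V⦄, x ∈ 𝒜 γ₁ → y ∈ 𝒜 γ₂ → v ∈ 𝒱 γ₃ →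
    r (α y) (s x v) = ε γ₃ γ₂ • s (d x y) (β v)
  dot_diam_vxy : ∀ ⦃γ₁ γ₂ γ₃ : Γ⦄ ⦃x y : A⦄ ⦃v : V⦄, x ∈ 𝒜 γ₁ → y ∈ 𝒜 γ₂ → v ∈ 𝒱 γ₃ →
    r (α y) (s x v) = s (α x) (r y v)
  diam_dot_xyv : ∀ ⦃γ₁ γ₂ γ₃ : Γ⦄ ⦃x y : A⦄ ⦃v : V⦄, x ∈ 𝒜 γ₁ → y ∈ 𝒜 γ₂ → v ∈ 𝒱 γ₃ →
    s (d x y) (β v) - l (α x) (s y v) = ε γ₁ γ₂ • (s (d y x) (β v) - l (α y) (s x v))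
  diam_dot_xvy : ∀ ⦃γ₁ γ₂ γ₃ : Γ⦄ ⦃x y : A⦄ ⦃v : V⦄, x ∈ 𝒜 γ₁ → y ∈ 𝒜 γ₂ → v ∈ 𝒱 γ₃ →
    ε (γ₁ + γ₃) γ₂ • (s (α y) (l x v) - ε γ₁ γ₃ • s (α y) (r x v))
      = ε γ₃ γ₂ • l (α x) (s y v) - ε γ₁ γ₃ • r (μ x y) (β v)

namespace IsCommFactor

theorem mul_swap (hε : IsCommFactor ε) (a b : Γ) : ε a b * ε b a = 1 := hε.2.1 a b

theorem add_right (hε : IsCommFactor ε) (a b c : Γ) : ε a (b + c) = ε a b * ε a c :=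
  hε.2.2.1 a b c

theorem add_left (hε : IsCommFactor ε) (a b c : Γ) : ε (a + b) c = ε a c * ε b c :=
  hε.2.2.2 a b c

end IsCommFactor

theorem HNPBimoduleCompat.diam_dot_vxy (h : HNPBimoduleCompat 𝒜 𝒱 ε μ d α β s l r)
    (hε : IsCommFactor ε) (hx : x ∈ 𝒜 γ₁) (hy : y ∈ 𝒜 γ₂) (hv : v ∈ 𝒱 γ₃) :
    ε (γ₃ + γ₁) γ₂ • s (α y) (r x v) - r (μ x y) (β v)
      = ε γ₃ γ₁ • (ε (γ₁ + γ₃) γ₂ • s (α y) (l x v) - ε γ₃ γ₂ • l (α x) (s y v)) := by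
  rw [add_comm γ₃ γ₁]
  linear_combination (norm := module) -ε γ₃ γ₁ • h.diam_dot_xvy hx hy hv
    + hε.mul_swap γ₃ γ₁ • (r (μ x y) (β v) - ε (γ₁ + γ₃) γ₂ • s (α y) (r x v))

theorem sdDot_mem (hμ : GradedMul 𝒜 μ) (hs : GradedAction 𝒜 𝒱 s)
    (hX : X ∈ (𝒜 γ₁).prod (𝒱 γ₁)) (hY : Y ∈ (𝒜 γ₂).prod (𝒱 γ₂)) :
    sdDot ε μ s γ₁ γ₂ X Y ∈ (𝒜 (γ₁ + γ₂)).prod (𝒱 (γ₁ + γ₂)) := by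
  have hYX : s Y.1 X.2 ∈ 𝒱 (γ₁ + γ₂) := add_comm γ₂ γ₁ ▸ hs hY.1 hX.2
  exact ⟨hμ hX.1 hY.1, add_mem (hs hX.1 hY.2) (Submodule.smul_mem _ _ hYX)⟩

theorem sdDiam_mem (hd : GradedMul 𝒜 d) (hl : GradedAction 𝒜 𝒱 l) (hr : GradedAction 𝒜 𝒱 r)
    (hX : X ∈ (𝒜 γ₁).prod (𝒱 γ₁)) (hY : Y ∈ (𝒜 γ₂).prod (𝒱 γ₂)) :
    sdDiam d l r X Y ∈ (𝒜 (γ₁ + γ₂)).prod (𝒱 (γ₁ + γ₂)) := by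
  have hYX : r Y.1 X.2 ∈ 𝒱 (γ₁ + γ₂) := add_comm γ₂ γ₁ ▸ hr hY.1 hX.2
  exact ⟨hd hX.1 hY.1, add_mem (hl hX.1 hY.2) hYX⟩

theorem IsEpsComm.sdDot_comm (hcomm : IsEpsComm 𝒜 ε μ) (hε : IsCommFactor ε)
    (hX : X ∈ (𝒜 γ₁).prod (𝒱 γ₁)) (hY : Y ∈ (𝒜 γ₂).prod (𝒱 γ₂)) :
    sdDot ε μ s γ₁ γ₂ X Y = ε γ₁ γ₂ • sdDot ε μ s γ₂ γ₁ Y X := by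
  refine Prod.ext (hcomm hX.1 hY.1) ?_
  calc
    s X.1 Y.2 + ε γ₁ γ₂ • s Y.1 X.2
      = (ε γ₁ γ₂ * ε γ₂ γ₁) • s X.1 Y.2 + ε γ₁ γ₂ • s Y.1 X.2 := by
        rw [hε.mul_swap, one_smul]
    _ = ε γ₁ γ₂ • (s Y.1 X.2 + ε γ₂ γ₁ • s X.1 Y.2) := by module

theorem IsHomAssocBimodule.sdDot_assoc (hs : IsHomAssocBimodule 𝒜 𝒱 μ α β s)
    (hε : IsCommFactor ε) (hcomm : IsEpsComm 𝒜 ε μ) (hassoc : IsHomAssoc 𝒜 μ α)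
    (hX : X ∈ (𝒜 γ₁).prod (𝒱 γ₁)) (hY : Y ∈ (𝒜 γ₂).prod (𝒱 γ₂))
    (hZ : Z ∈ (𝒜 γ₃).prod (𝒱 γ₃)) :
    sdDot ε μ s (γ₁ + γ₂) γ₃ (sdDot ε μ s γ₁ γ₂ X Y) (sdEnd α β Z)
      = sdDot ε μ s γ₁ (γ₂ + γ₃) (sdEnd α β X) (sdDot ε μ s γ₂ γ₃ Y Z) := by
  obtain ⟨hx, hu⟩ := Submodule.mem_prod.1 hX
  obtain ⟨hy, hv⟩ := Submodule.mem_prod.1 hY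
  obtain ⟨hz, hw⟩ := Submodule.mem_prod.1 hZ
  refine Prod.ext (hassoc hx hy hz) ?_
  have part_X : s (μ Y.1 Z.1) (β X.2) = ε γ₂ γ₃ • s (α Z.1) (s Y.1 X.2) :=
    (hs hy hz hu).trans (hs.action_comm hcomm hy hz hu)
  have part_Y : s (α X.1) (s Z.1 Y.2) = ε γ₁ γ₃ • s (α Z.1) (s X.1 Y.2) :=
    hs.action_comm hcomm hx hz hv
  have part_Z : s (μ X.1 Y.1) (β Z.2) = s (α X.1) (s Y.1 Z.2) := hs hx hy hw
  simp only [sdDot, sdEnd, hε.add_left, hε.add_right, map_add, map_smul]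
  linear_combination (norm := module)
    part_Z - ε γ₂ γ₃ • part_Y - (ε γ₁ γ₂ * ε γ₁ γ₃) • part_X

theorem HNPBimoduleCompat.sdDiam_sdDot (h : HNPBimoduleCompat 𝒜 𝒱 ε μ d α β s l r)
    (hε : IsCommFactor ε) (hμd : HNPCompat 𝒜 ε μ d α) (hX : X ∈ (𝒜 γ₁).prod (𝒱 γ₁))
    (hY : Y ∈ (𝒜 γ₂).prod (𝒱 γ₂)) (hZ : Z ∈ (𝒜 γ₃).prod (𝒱 γ₃)) :
    sdDiam d l r (sdDot ε μ s γ₁ γ₂ X Y) (sdEnd α β Z)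
      = ε γ₂ γ₃ • sdDot ε μ s (γ₁ + γ₃) γ₂ (sdDiam d l r X Z) (sdEnd α β Y) := by
  obtain ⟨hx, hu⟩ := Submodule.mem_prod.1 hX
  obtain ⟨hy, hv⟩ := Submodule.mem_prod.1 hY
  obtain ⟨hz, hw⟩ := Submodule.mem_prod.1 hZ
  refine Prod.ext (hμd.1 hx hy hz) ?_
  have coeff : ε γ₂ γ₃ * ε (γ₁ + γ₃) γ₂ = ε γ₁ γ₂ := by
    rw [hε.add_left, mul_left_comm, hε.mul_swap, mul_one]
  have part_X : r (α Z.1) (s Y.1 X.2) = s (α Y.1) (r Z.1 X.2) := h.dot_diam_vxy hy hz hu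
  have part_Y : r (α Z.1) (s X.1 Y.2) = ε γ₂ γ₃ • s (d X.1 Z.1) (β Y.2) :=
    h.dot_diam_xvy hx hz hv
  have part_Z : l (μ X.1 Y.1) (β Z.2) = ε γ₁ γ₂ • s (α Y.1) (l X.1 Z.2) :=
    h.dot_diam_xyv hx hy hw
  simp only [sdDiam, sdDot, sdEnd, map_add, map_smul, Prod.smul_snd, smul_add, smul_smul, coeff]
  linear_combination (norm := module) part_Z + part_Y + ε γ₁ γ₂ • part_X

theorem HNPBimoduleCompat.sdDot_sdDiam_left_symm
    (h : HNPBimoduleCompat 𝒜 𝒱 ε μ d α β s l r) (hε : IsCommFactor ε)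
    (hμd : HNPCompat 𝒜 ε μ d α) (hX : X ∈ (𝒜 γ₁).prod (𝒱 γ₁))
    (hY : Y ∈ (𝒜 γ₂).prod (𝒱 γ₂)) (hZ : Z ∈ (𝒜 γ₃).prod (𝒱 γ₃)) :
    sdDot ε μ s (γ₁ + γ₂) γ₃ (sdDiam d l r X Y) (sdEnd α β Z)
        - sdDiam d l r (sdEnd α β X) (sdDot ε μ s γ₂ γ₃ Y Z)
      = ε γ₁ γ₂ • (sdDot ε μ s (γ₂ + γ₁) γ₃ (sdDiam d l r Y X) (sdEnd α β Z)
        - sdDiam d l r (sdEnd α β Y) (sdDot ε μ s γ₁ γ₃ X Z)) := by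
  obtain ⟨hx, hu⟩ := Submodule.mem_prod.1 hX
  obtain ⟨hy, hv⟩ := Submodule.mem_prod.1 hY
  obtain ⟨hz, hw⟩ := Submodule.mem_prod.1 hZ
  refine Prod.ext (hμd.2 hx hy hz) ?_
  have part_X := h.diam_dot_vxy hε hy hz hu
  have part_Y := h.diam_dot_xvy hx hz hv
  have part_Z := h.diam_dot_xyv hx hy hw
  rw [add_comm γ₂ γ₁] at part_X ⊢
  simp only [sdDiam, sdDot, sdEnd, map_add, map_smul, Prod.snd_sub, Prod.smul_snd]
  linear_combination (norm := module) part_Z + part_Y + part_X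

end Bimodule

/-- semidirect product of a Hom-Novikov-Poisson color Hom-algebra
with a bimodule `(s, l, r, β, V)`. -/
theorem semidirect_homNovikovPoisson
    {K Γ A V : Type*} [Field K] [AddCommGroup Γ] [AddCommGroup A] [Module K A]
    [AddCommGroup V] [Module K V]
    (𝒜 : Γ → Submodule K A) (𝒱 : Γ → Submodule K V) (ε : Γ → Γ → K)
    (μ d : A →ₗ[K] A →ₗ[K] A) (α : A →ₗ[K] A) (β : V →ₗ[K] V)
    (s l r : A →ₗ[K] V →ₗ[K] V)
    (hε : IsCommFactor ε) (hHNP : IsHNP 𝒜 ε μ d α)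
    (hβ : ∀ ⦃γ : Γ⦄ ⦃v : V⦄, v ∈ 𝒱 γ → β v ∈ 𝒱 γ)
    (hsg : ∀ ⦃γ₁ γ₂ : Γ⦄ ⦃x : A⦄ ⦃v : V⦄, x ∈ 𝒜 γ₁ → v ∈ 𝒱 γ₂ → s x v ∈ 𝒱 (γ₁ + γ₂))
    (hlg : ∀ ⦃γ₁ γ₂ : Γ⦄ ⦃x : A⦄ ⦃v : V⦄, x ∈ 𝒜 γ₁ → v ∈ 𝒱 γ₂ → l x v ∈ 𝒱 (γ₁ + γ₂))
    (hrg : ∀ ⦃γ₁ γ₂ : Γ⦄ ⦃x : A⦄ ⦃v : V⦄, x ∈ 𝒜 γ₁ → v ∈ 𝒱 γ₂ → r x v ∈ 𝒱 (γ₁ + γ₂))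
    -- `(s, β, V)` is a bimodule of the ε-commutative Hom-associative algebra `(A, μ)`
    (hsbimod : ∀ ⦃γ₁ γ₂ γ₃ : Γ⦄ ⦃x y : A⦄ ⦃v : V⦄, x ∈ 𝒜 γ₁ → y ∈ 𝒜 γ₂ → v ∈ 𝒱 γ₃ →
      s (μ x y) (β v) = s (α x) (s y v))
    -- `(l, r, β, V)` is a bimodule of the Hom-Novikov algebra `(A, d)`
    (hb1 : ∀ ⦃γ₁ γ₂ γ₃ : Γ⦄ ⦃x y : A⦄ ⦃v : V⦄, x ∈ 𝒜 γ₁ → y ∈ 𝒜 γ₂ → v ∈ 𝒱 γ₃ →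
      l (d x y) (β v) - l (α x) (l y v) = ε γ₁ γ₂ • (l (d y x) (β v) - l (α y) (l x v)))
    (hb2 : ∀ ⦃γ₁ γ₂ γ₃ : Γ⦄ ⦃x y : A⦄ ⦃v : V⦄, x ∈ 𝒜 γ₁ → y ∈ 𝒜 γ₂ → v ∈ 𝒱 γ₃ →
      r (α y) (l x v) - l (α x) (r y v) = ε γ₁ γ₃ • (r (α y) (r x v) - r (d x y) (β v)))
    (hb3 : ∀ ⦃γ₁ γ₂ γ₃ : Γ⦄ ⦃x y : A⦄ ⦃v : V⦄, x ∈ 𝒜 γ₁ → y ∈ 𝒜 γ₂ → v ∈ 𝒱 γ₃ →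
      r (α y) (r x v) - r (d x y) (β v) = ε γ₃ γ₁ • (r (α y) (l x v) - l (α x) (r y v)))
    (hb4 : ∀ ⦃γ₁ γ₂ γ₃ : Γ⦄ ⦃x y : A⦄ ⦃v : V⦄, x ∈ 𝒜 γ₁ → y ∈ 𝒜 γ₂ → v ∈ 𝒱 γ₃ →
      l (d x y) (β v) = ε γ₂ γ₃ • r (α y) (l x v))
    (hb5 : ∀ ⦃γ₁ γ₂ γ₃ : Γ⦄ ⦃x y : A⦄ ⦃v : V⦄, x ∈ 𝒜 γ₁ → y ∈ 𝒜 γ₂ → v ∈ 𝒱 γ₃ →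
      r (α y) (l x v) = ε γ₃ γ₂ • l (d x y) (β v))
    (hb6 : ∀ ⦃γ₁ γ₂ γ₃ : Γ⦄ ⦃x y : A⦄ ⦃v : V⦄, x ∈ 𝒜 γ₁ → y ∈ 𝒜 γ₂ → v ∈ 𝒱 γ₃ →
      r (α y) (r x v) = ε γ₁ γ₂ • r (α x) (r y v))
    -- the five compatibility conditions of a Hom-Novikov-Poisson bimodule
    (hc1 : ∀ ⦃γ₁ γ₂ γ₃ : Γ⦄ ⦃x y : A⦄ ⦃v : V⦄, x ∈ 𝒜 γ₁ → y ∈ 𝒜 γ₂ → v ∈ 𝒱 γ₃ →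
      l (μ x y) (β v) = ε γ₁ γ₂ • s (α y) (l x v))
    (hc2 : ∀ ⦃γ₁ γ₂ γ₃ : Γ⦄ ⦃x y : A⦄ ⦃v : V⦄, x ∈ 𝒜 γ₁ → y ∈ 𝒜 γ₂ → v ∈ 𝒱 γ₃ →
      r (α y) (s x v) = ε γ₃ γ₂ • s (d x y) (β v))
    (hc3 : ∀ ⦃γ₁ γ₂ γ₃ : Γ⦄ ⦃x y : A⦄ ⦃v : V⦄, x ∈ 𝒜 γ₁ → y ∈ 𝒜 γ₂ → v ∈ 𝒱 γ₃ →
      r (α y) (s x v) = s (α x) (r y v))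
    (hc4 : ∀ ⦃γ₁ γ₂ γ₃ : Γ⦄ ⦃x y : A⦄ ⦃v : V⦄, x ∈ 𝒜 γ₁ → y ∈ 𝒜 γ₂ → v ∈ 𝒱 γ₃ →
      s (d x y) (β v) - l (α x) (s y v)
        = ε γ₁ γ₂ • (s (d y x) (β v) - l (α y) (s x v)))
    (hc5 : ∀ ⦃γ₁ γ₂ γ₃ : Γ⦄ ⦃x y : A⦄ ⦃v : V⦄, x ∈ 𝒜 γ₁ → y ∈ 𝒜 γ₂ → v ∈ 𝒱 γ₃ →
      ε (γ₁ + γ₃) γ₂ • (s (α y) (l x v) - ε γ₁ γ₃ • s (α y) (r x v))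
        = ε γ₃ γ₂ • l (α x) (s y v) - ε γ₁ γ₃ • r (μ x y) (β v)) :
    -- the semidirect product is a Hom-Novikov-Poisson color Hom-algebra
    (∀ ⦃γ₁ γ₂ : Γ⦄ ⦃X Y : A × V⦄, X ∈ (𝒜 γ₁).prod (𝒱 γ₁) → Y ∈ (𝒜 γ₂).prod (𝒱 γ₂) →
        sdDot ε μ s γ₁ γ₂ X Y ∈ (𝒜 (γ₁ + γ₂)).prod (𝒱 (γ₁ + γ₂)) ∧
        sdDiam d l r X Y ∈ (𝒜 (γ₁ + γ₂)).prod (𝒱 (γ₁ + γ₂))) ∧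
    (∀ ⦃γ₁ γ₂ : Γ⦄ ⦃X Y : A × V⦄, X ∈ (𝒜 γ₁).prod (𝒱 γ₁) → Y ∈ (𝒜 γ₂).prod (𝒱 γ₂) →
        sdDot ε μ s γ₁ γ₂ X Y = ε γ₁ γ₂ • sdDot ε μ s γ₂ γ₁ Y X) ∧
    (∀ ⦃γ₁ γ₂ γ₃ : Γ⦄ ⦃X Y Z : A × V⦄, X ∈ (𝒜 γ₁).prod (𝒱 γ₁) →
        Y ∈ (𝒜 γ₂).prod (𝒱 γ₂) → Z ∈ (𝒜 γ₃).prod (𝒱 γ₃) →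
        sdDot ε μ s (γ₁ + γ₂) γ₃ (sdDot ε μ s γ₁ γ₂ X Y) (sdEnd α β Z)
          = sdDot ε μ s γ₁ (γ₂ + γ₃) (sdEnd α β X) (sdDot ε μ s γ₂ γ₃ Y Z)) ∧
    (∀ ⦃γ₁ γ₂ γ₃ : Γ⦄ ⦃X Y Z : A × V⦄, X ∈ (𝒜 γ₁).prod (𝒱 γ₁) →
        Y ∈ (𝒜 γ₂).prod (𝒱 γ₂) → Z ∈ (𝒜 γ₃).prod (𝒱 γ₃) →
        sdDiam d l r (sdDiam d l r X Y) (sdEnd α β Z)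
            - sdDiam d l r (sdEnd α β X) (sdDiam d l r Y Z)
          = ε γ₁ γ₂ • (sdDiam d l r (sdDiam d l r Y X) (sdEnd α β Z)
            - sdDiam d l r (sdEnd α β Y) (sdDiam d l r X Z))) ∧
    (∀ ⦃γ₁ γ₂ γ₃ : Γ⦄ ⦃X Y Z : A × V⦄, X ∈ (𝒜 γ₁).prod (𝒱 γ₁) →
        Y ∈ (𝒜 γ₂).prod (𝒱 γ₂) → Z ∈ (𝒜 γ₃).prod (𝒱 γ₃) →
        sdDiam d l r (sdDiam d l r X Y) (sdEnd α β Z)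
          = ε γ₂ γ₃ • sdDiam d l r (sdDiam d l r X Z) (sdEnd α β Y)) ∧
    (∀ ⦃γ₁ γ₂ γ₃ : Γ⦄ ⦃X Y Z : A × V⦄, X ∈ (𝒜 γ₁).prod (𝒱 γ₁) →
        Y ∈ (𝒜 γ₂).prod (𝒱 γ₂) → Z ∈ (𝒜 γ₃).prod (𝒱 γ₃) →
        sdDiam d l r (sdDot ε μ s γ₁ γ₂ X Y) (sdEnd α β Z)
          = ε γ₂ γ₃ • sdDot ε μ s (γ₁ + γ₃) γ₂ (sdDiam d l r X Z) (sdEnd α β Y)) ∧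
    (∀ ⦃γ₁ γ₂ γ₃ : Γ⦄ ⦃X Y Z : A × V⦄, X ∈ (𝒜 γ₁).prod (𝒱 γ₁) →
        Y ∈ (𝒜 γ₂).prod (𝒱 γ₂) → Z ∈ (𝒜 γ₃).prod (𝒱 γ₃) →
        sdDot ε μ s (γ₁ + γ₂) γ₃ (sdDiam d l r X Y) (sdEnd α β Z)
            - sdDiam d l r (sdEnd α β X) (sdDot ε μ s γ₂ γ₃ Y Z)
          = ε γ₁ γ₂ • (sdDot ε μ s (γ₂ + γ₁) γ₃ (sdDiam d l r Y X) (sdEnd α β Z)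
            - sdDiam d l r (sdEnd α β Y) (sdDot ε μ s γ₁ γ₃ X Z))) := by
  obtain ⟨hμ, hd, -, hcomm, hassoc, hnovikov, hcompat⟩ := hHNP
  have hs : IsHomAssocBimodule 𝒜 𝒱 μ α β s := hsbimod
  have hlr : IsHomNovikovBimodule 𝒜 𝒱 ε d α β l r := ⟨hb1, hb2, hb3, hb4, hb5, hb6⟩
  have hslr : HNPBimoduleCompat 𝒜 𝒱 ε μ d α β s l r := ⟨hc1, hc2, hc3, hc4, hc5⟩
  exact ⟨fun _ _ _ _ hX hY ↦ ⟨sdDot_mem hμ hsg hX hY, sdDiam_mem hd hlg hrg hX hY⟩,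
    fun _ _ _ _ ↦ hcomm.sdDot_comm hε,
    fun _ _ _ _ _ _ ↦ hs.sdDot_assoc hε hcomm hassoc,
    fun _ _ _ _ _ _ ↦ hlr.sdDiam_left_symm hnovikov,
    fun _ _ _ _ _ _ ↦ hlr.sdDiam_right_comm hnovikov,
    fun _ _ _ _ _ _ ↦ hslr.sdDiam_sdDot hε hcompat,
    fun _ _ _ _ _ _ ↦ hslr.sdDot_sdDiam_left_symm hε hcompat⟩
end

section
/- A Hom-Novikov-Poisson color Hom-algebra (A, ·, ⋄, ε, α) is admissible (i.e., (A, ·, [·,·], ε, α) with [x,y] = x⋄y − ε(x,y)y⋄x is a Hom-Poisson color Hom-algebra) if and only if the left Hom-associator vanishes: (x·y)⋄α(z) = α(x)⋄(y·z) for all homogeneous x,y,z. -/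
open scoped TensorProduct

/-!
Expand the Hom-Leibniz identity at `(x, y, z)`. The first compatibility condition rewrites
`ε(x, y) α(y) · [x, z]` as `(x · y) ⋄ α(z) - ε(x, y + z) (y · z) ⋄ α(x)`, the second rewrites
`ε(x + y, z) α(z) · [x, y]` as `α(x) ⋄ (y · z) - ε(x, y) α(y) ⋄ (x · z)`, and after cancellation
only `(x · y) ⋄ α(z) = ε(x, y) α(y) ⋄ (x · z)` is left, which is the vanishing of the left
Hom-associator at `(y, x, z)`. The Hom-Lie axioms hold for the ε-commutator in any case, because
its Jacobiator is an alternating sum of Hom-associators of `⋄`.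
-/

section HomPoissonBracket

variable {K Γ A : Type*} [Field K] [AddCommGroup Γ] [AddCommGroup A] [Module K A]
  {𝒜 : Γ → Submodule K A} {ε : Γ → Γ → K} {μ d : A →ₗ[K] A →ₗ[K] A} {α : A →ₗ[K] A}

/-- The Hom-associator of a bilinear product `d` twisted by `α`; its vanishing is
Hom-associativity. -/
def homAssociator (d : A →ₗ[K] A →ₗ[K] A) (α : A →ₗ[K] A) (x y z : A) : A :=
  d (d x y) (α z) - d (α x) (d y z)

/-- A Hom-left-symmetric (Hom-pre-Lie) color product: the Hom-associator is ε-symmetric in its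
first two arguments. This is the first of the two Hom-Novikov axioms. -/
def IsHomLeftSymmetric (𝒜 : Γ → Submodule K A) (ε : Γ → Γ → K) (d : A →ₗ[K] A →ₗ[K] A)
    (α : A →ₗ[K] A) : Prop :=
  ∀ ⦃γ₁ γ₂ γ₃ : Γ⦄ ⦃x y z : A⦄, x ∈ 𝒜 γ₁ → y ∈ 𝒜 γ₂ → z ∈ 𝒜 γ₃ →
    homAssociator d α x y z = ε γ₁ γ₂ • homAssociator d α y x z

theorem IsCommFactor.mul_swap_s12 (hε : IsCommFactor ε) (a b : Γ) : ε a b * ε b a = 1 :=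
  hε.2.1 a b

theorem IsCommFactor.map_add_right (hε : IsCommFactor ε) (a b c : Γ) :
    ε a (b + c) = ε a b * ε a c :=
  hε.2.2.1 a b c

theorem IsCommFactor.swap_mul_map_add_right (hε : IsCommFactor ε) (a b c : Γ) :
    ε c a * ε a (b + c) = ε a b := by
  rw [hε.map_add_right, mul_left_comm, hε.mul_swap_s12, mul_one]

theorem brkt_mem (hd : GradedMul 𝒜 d) {γ δ : Γ} {x y : A} (hx : x ∈ 𝒜 γ) (hy : y ∈ 𝒜 δ) :
    brkt ε d γ δ x y ∈ 𝒜 (γ + δ) :=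
  sub_mem (hd hx hy) ((𝒜 (γ + δ)).smul_mem _ (add_comm δ γ ▸ hd hy hx))

theorem brkt_skew (hε : IsCommFactor ε) (γ δ : Γ) (x y : A) :
    brkt ε d γ δ x y = -(ε γ δ • brkt ε d δ γ y x) := by
  simp only [brkt, smul_sub, smul_smul, hε.mul_swap_s12, one_smul, neg_sub]

theorem smul_brkt_brkt (hε : IsCommFactor ε) (γ₁ γ₂ γ₃ : Γ) (x y z : A) :
    ε γ₃ γ₁ • brkt ε d γ₁ (γ₂ + γ₃) (α x) (brkt ε d γ₂ γ₃ y z)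
      = ε γ₃ γ₁ • (d (α x) (d y z) - ε γ₂ γ₃ • d (α x) (d z y))
        - ε γ₁ γ₂ • (d (d y z) (α x) - ε γ₂ γ₃ • d (d z y) (α x)) := by
  simp only [brkt, map_sub, map_smul, LinearMap.sub_apply, LinearMap.smul_apply]
  rw [smul_sub, smul_smul (ε γ₃ γ₁), hε.swap_mul_map_add_right]

theorem cyclic_sum_brkt_brkt_eq_neg_homAssociator (hε : IsCommFactor ε) (γ₁ γ₂ γ₃ : Γ)
    (x y z : A) :
    ε γ₃ γ₁ • brkt ε d γ₁ (γ₂ + γ₃) (α x) (brkt ε d γ₂ γ₃ y z)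
        + ε γ₁ γ₂ • brkt ε d γ₂ (γ₃ + γ₁) (α y) (brkt ε d γ₃ γ₁ z x)
        + ε γ₂ γ₃ • brkt ε d γ₃ (γ₁ + γ₂) (α z) (brkt ε d γ₁ γ₂ x y)
      = -(ε γ₃ γ₁ • (homAssociator d α x y z - ε γ₁ γ₂ • homAssociator d α y x z)
          + ε γ₁ γ₂ • (homAssociator d α y z x - ε γ₂ γ₃ • homAssociator d α z y x)
          + ε γ₂ γ₃ • (homAssociator d α z x y - ε γ₃ γ₁ • homAssociator d α x z y)) := by
  simp only [smul_brkt_brkt hε, homAssociator]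
  module

theorem IsHomLeftSymmetric.cyclic_sum_brkt_brkt_eq_zero (hd : IsHomLeftSymmetric 𝒜 ε d α)
    (hε : IsCommFactor ε) {γ₁ γ₂ γ₃ : Γ} {x y z : A}
    (hx : x ∈ 𝒜 γ₁) (hy : y ∈ 𝒜 γ₂) (hz : z ∈ 𝒜 γ₃) :
    ε γ₃ γ₁ • brkt ε d γ₁ (γ₂ + γ₃) (α x) (brkt ε d γ₂ γ₃ y z)
      + ε γ₁ γ₂ • brkt ε d γ₂ (γ₃ + γ₁) (α y) (brkt ε d γ₃ γ₁ z x)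
      + ε γ₂ γ₃ • brkt ε d γ₃ (γ₁ + γ₂) (α z) (brkt ε d γ₁ γ₂ x y) = 0 := by
  rw [cyclic_sum_brkt_brkt_eq_neg_homAssociator hε, hd hx hy hz, hd hy hz hx, hd hz hx hy]
  simp only [sub_self, smul_zero, add_zero, neg_zero]

theorem HNPCompat.smul_mul_brkt_eq_left (h : HNPCompat 𝒜 ε μ d α) (hε : IsCommFactor ε)
    (hd : GradedMul 𝒜 d) (hα : GradedEnd 𝒜 α) (hμ : IsEpsComm 𝒜 ε μ)
    {γ₁ γ₂ γ₃ : Γ} {x y z : A} (hx : x ∈ 𝒜 γ₁) (hy : y ∈ 𝒜 γ₂) (hz : z ∈ 𝒜 γ₃) :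
    ε γ₁ γ₂ • μ (α y) (brkt ε d γ₁ γ₃ x z)
      = d (μ x y) (α z) - ε γ₁ (γ₂ + γ₃) • d (μ y z) (α x) := by
  have hzxy : ε γ₂ γ₃ • μ (d z x) (α y) = ε γ₁ γ₂ • d (μ y z) (α x) := by
    rw [hμ hy hz, map_smul, LinearMap.smul_apply, h.1 hz hy hx, smul_smul, smul_smul,
      mul_right_comm, hε.mul_swap_s12, one_mul]
  calc ε γ₁ γ₂ • μ (α y) (brkt ε d γ₁ γ₃ x z)
      = ε γ₂ γ₃ • μ (brkt ε d γ₁ γ₃ x z) (α y) := by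
        rw [hμ (hα hy) (brkt_mem hd hx hz), smul_smul, add_comm γ₁ γ₃,
          hε.swap_mul_map_add_right]
    _ = ε γ₂ γ₃ • μ (d x z) (α y) - ε γ₁ γ₃ • ε γ₂ γ₃ • μ (d z x) (α y) := by
        simp only [brkt, map_sub, map_smul, LinearMap.sub_apply, LinearMap.smul_apply,
          smul_sub, smul_comm (ε γ₂ γ₃)]
    _ = d (μ x y) (α z) - ε γ₁ (γ₂ + γ₃) • d (μ y z) (α x) := by
        rw [← h.1 hx hy hz, hzxy, smul_smul, mul_comm, hε.map_add_right]

theorem HNPCompat.smul_mul_brkt_eq_right (h : HNPCompat 𝒜 ε μ d α)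
    (hd : GradedMul 𝒜 d) (hα : GradedEnd 𝒜 α) (hμ : IsEpsComm 𝒜 ε μ)
    {γ₁ γ₂ γ₃ : Γ} {x y z : A} (hx : x ∈ 𝒜 γ₁) (hy : y ∈ 𝒜 γ₂) (hz : z ∈ 𝒜 γ₃) :
    ε (γ₁ + γ₂) γ₃ • μ (α z) (brkt ε d γ₁ γ₂ x y)
      = d (α x) (μ y z) - ε γ₁ γ₂ • d (α y) (μ x z) := by
  calc ε (γ₁ + γ₂) γ₃ • μ (α z) (brkt ε d γ₁ γ₂ x y)
      = μ (brkt ε d γ₁ γ₂ x y) (α z) := (hμ (brkt_mem hd hx hy) (hα hz)).symm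
    _ = μ (d x y) (α z) - ε γ₁ γ₂ • μ (d y x) (α z) := by
        simp only [brkt, map_sub, map_smul, LinearMap.sub_apply, LinearMap.smul_apply]
    _ = d (α x) (μ y z) - ε γ₁ γ₂ • d (α y) (μ x z) := by
        linear_combination (norm := module) h.2 hx hy hz

theorem HNPCompat.leibniz_brkt_iff (h : HNPCompat 𝒜 ε μ d α) (hε : IsCommFactor ε)
    (hd : GradedMul 𝒜 d) (hα : GradedEnd 𝒜 α) (hμ : IsEpsComm 𝒜 ε μ)
    {γ₁ γ₂ γ₃ : Γ} {x y z : A} (hx : x ∈ 𝒜 γ₁) (hy : y ∈ 𝒜 γ₂) (hz : z ∈ 𝒜 γ₃) :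
    brkt ε d γ₁ (γ₂ + γ₃) (α x) (μ y z)
        = ε γ₁ γ₂ • μ (α y) (brkt ε d γ₁ γ₃ x z)
          + ε (γ₁ + γ₂) γ₃ • μ (α z) (brkt ε d γ₁ γ₂ x y)
      ↔ d (μ y x) (α z) = d (α y) (μ x z) := by
  have hxy : d (μ x y) (α z) = ε γ₁ γ₂ • d (μ y x) (α z) := by
    rw [hμ hx hy, map_smul, LinearMap.smul_apply]
  rw [h.smul_mul_brkt_eq_left hε hd hα hμ hx hy hz,
    h.smul_mul_brkt_eq_right hd hα hμ hx hy hz, hxy, brkt,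
    ← smul_right_inj (hε.1 γ₁ γ₂) (m₁ := d (μ y x) (α z))]
  constructor <;> intro heq <;> linear_combination (norm := module) -heq

theorem homNovikovPoisson_admissible_iff_general (hε : IsCommFactor ε) (hd : GradedMul 𝒜 d)
    (hα : GradedEnd 𝒜 α) (hμ : IsEpsComm 𝒜 ε μ) (hd_symm : IsHomLeftSymmetric 𝒜 ε d α)
    (hcompat : HNPCompat 𝒜 ε μ d α) :
    ((∀ ⦃γ₁ γ₂ : Γ⦄ ⦃x y : A⦄, x ∈ 𝒜 γ₁ → y ∈ 𝒜 γ₂ →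
        brkt ε d γ₁ γ₂ x y = -(ε γ₁ γ₂ • brkt ε d γ₂ γ₁ y x)) ∧
     (∀ ⦃γ₁ γ₂ γ₃ : Γ⦄ ⦃x y z : A⦄, x ∈ 𝒜 γ₁ → y ∈ 𝒜 γ₂ → z ∈ 𝒜 γ₃ →
        ε γ₃ γ₁ • brkt ε d γ₁ (γ₂ + γ₃) (α x) (brkt ε d γ₂ γ₃ y z)
          + ε γ₁ γ₂ • brkt ε d γ₂ (γ₃ + γ₁) (α y) (brkt ε d γ₃ γ₁ z x)
          + ε γ₂ γ₃ • brkt ε d γ₃ (γ₁ + γ₂) (α z) (brkt ε d γ₁ γ₂ x y) = 0) ∧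
     (∀ ⦃γ₁ γ₂ γ₃ : Γ⦄ ⦃x y z : A⦄, x ∈ 𝒜 γ₁ → y ∈ 𝒜 γ₂ → z ∈ 𝒜 γ₃ →
        brkt ε d γ₁ (γ₂ + γ₃) (α x) (μ y z)
          = ε γ₁ γ₂ • μ (α y) (brkt ε d γ₁ γ₃ x z)
            + ε (γ₁ + γ₂) γ₃ • μ (α z) (brkt ε d γ₁ γ₂ x y)))
    ↔
    (∀ ⦃γ₁ γ₂ γ₃ : Γ⦄ ⦃x y z : A⦄, x ∈ 𝒜 γ₁ → y ∈ 𝒜 γ₂ → z ∈ 𝒜 γ₃ →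
        d (μ x y) (α z) = d (α x) (μ y z)) := by
  constructor
  · rintro ⟨-, -, leibniz⟩ γ₁ γ₂ γ₃ x y z hx hy hz
    exact (hcompat.leibniz_brkt_iff hε hd hα hμ hy hx hz).1 (leibniz hy hx hz)
  · intro hassoc
    refine ⟨fun _ _ _ _ _ _ ↦ brkt_skew hε _ _ _ _,
      fun _ _ _ _ _ _ hx hy hz ↦ hd_symm.cyclic_sum_brkt_brkt_eq_zero hε hx hy hz,
      fun _ _ _ _ _ _ hx hy hz ↦ ?_⟩
    exact (hcompat.leibniz_brkt_iff hε hd hα hμ hx hy hz).2 (hassoc hy hx hz)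

end HomPoissonBracket

/-- a Hom-Novikov-Poisson color Hom-algebra is admissible (the
ε-commutator of `⋄` makes it a Hom-Poisson color Hom-algebra) iff the mixed left
Hom-associator vanishes. -/
theorem homNovikovPoisson_admissible_iff
    {K Γ A : Type*} [Field K] [AddCommGroup Γ] [AddCommGroup A] [Module K A]
    (𝒜 : Γ → Submodule K A) (ε : Γ → Γ → K)
    (μ d : A →ₗ[K] A →ₗ[K] A) (α : A →ₗ[K] A)
    (hε : IsCommFactor ε) (hHNP : IsHNP 𝒜 ε μ d α) :
    ((∀ ⦃γ₁ γ₂ : Γ⦄ ⦃x y : A⦄, x ∈ 𝒜 γ₁ → y ∈ 𝒜 γ₂ →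
        brkt ε d γ₁ γ₂ x y = -(ε γ₁ γ₂ • brkt ε d γ₂ γ₁ y x)) ∧
     (∀ ⦃γ₁ γ₂ γ₃ : Γ⦄ ⦃x y z : A⦄, x ∈ 𝒜 γ₁ → y ∈ 𝒜 γ₂ → z ∈ 𝒜 γ₃ →
        ε γ₃ γ₁ • brkt ε d γ₁ (γ₂ + γ₃) (α x) (brkt ε d γ₂ γ₃ y z)
          + ε γ₁ γ₂ • brkt ε d γ₂ (γ₃ + γ₁) (α y) (brkt ε d γ₃ γ₁ z x)
          + ε γ₂ γ₃ • brkt ε d γ₃ (γ₁ + γ₂) (α z) (brkt ε d γ₁ γ₂ x y) = 0) ∧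
     (∀ ⦃γ₁ γ₂ γ₃ : Γ⦄ ⦃x y z : A⦄, x ∈ 𝒜 γ₁ → y ∈ 𝒜 γ₂ → z ∈ 𝒜 γ₃ →
        brkt ε d γ₁ (γ₂ + γ₃) (α x) (μ y z)
          = ε γ₁ γ₂ • μ (α y) (brkt ε d γ₁ γ₃ x z)
            + ε (γ₁ + γ₂) γ₃ • μ (α z) (brkt ε d γ₁ γ₂ x y)))
    ↔
    (∀ ⦃γ₁ γ₂ γ₃ : Γ⦄ ⦃x y z : A⦄, x ∈ 𝒜 γ₁ → y ∈ 𝒜 γ₂ → z ∈ 𝒜 γ₃ →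
        d (μ x y) (α z) = d (α x) (μ y z)) := by
  obtain ⟨-, hd, hα, hμ, -, ⟨hd_symm, -⟩, hcompat⟩ := hHNP
  exact homNovikovPoisson_admissible_iff_general hε hd hα hμ hd_symm hcompat
end
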